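/- Let Ω and ω be as in the context. Then for all 0 < a < b < 1: ∫_b^1 ω dx < ((1−b)/(b−a)) (1/a)^{n−1} ∫_a^b ω dx and ∫_0^a ω dx < (a/(b−a)) (1/(1−b))^{n−1} ∫_a^b ω dx. Consequently ∫_0^1 ω dx < C(a,b) ∫_a^b ω dx, where C(a,b) = (1/(b−a)) [ (1/a)^{n−1}(1−b) + (1/(1−b))^{n−1} a ] + 1. -/

import Mathlib

open MeasureTheory Set Filter Topology RealInnerProductSpace

noncomputable section

/-- The point `(x, y) ∈ ℝ × ℝ^m ≅ ℝ^{m+1}`. -/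
def mkPt (m : ℕ) (x : ℝ) (y : EuclideanSpace ℝ (Fin m)) : EuclideanSpace ℝ (Fin (m+1)) :=
  (EuclideanSpace.equiv (Fin (m+1)) ℝ).symm (Fin.cons x ((EuclideanSpace.equiv (Fin m) ℝ) y))

/-- The cross-section `Ω(s) = {y : (s, y) ∈ Ω}`. -/
def cross {m : ℕ} (Ω : Set (EuclideanSpace ℝ (Fin (m+1)))) (s : ℝ) :
    Set (EuclideanSpace ℝ (Fin m)) := {y | mkPt m s y ∈ Ω}

/-- `ω(s)`: the (n-1)-dimensional volume of the cross-section `Ω(s)`. -/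
def ωvol {m : ℕ} (Ω : Set (EuclideanSpace ℝ (Fin (m+1)))) (s : ℝ) : ℝ :=
  (volume (cross Ω s)).toReal

/-- The Laplacian, as the sum of the pure second derivatives along the standard basis. -/
def lap {k : ℕ} (u : EuclideanSpace ℝ (Fin k) → ℝ) (p : EuclideanSpace ℝ (Fin k)) : ℝ :=
  ∑ i, fderiv ℝ (fun q => fderiv ℝ u q (EuclideanSpace.single i 1)) p (EuclideanSpace.single i 1)

/-- The cross-sectional average `ū(x)` of `u`. -/
def ubarFn {m : ℕ} (Ω : Set (EuclideanSpace ℝ (Fin (m+1))))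
    (u : EuclideanSpace ℝ (Fin (m+1)) → ℝ) (x : ℝ) : ℝ :=
  (∫ y in cross Ω x, u (mkPt m x y)) / ωvol Ω x

lemma mkPt_comb (m : ℕ) (c d x x' : ℝ) (y y' : EuclideanSpace ℝ (Fin m)) :
    mkPt m (c * x + d * x') (c • y + d • y') = c • mkPt m x y + d • mkPt m x' y' := by
  ext i
  refine Fin.cases ?_ (fun j => ?_) i <;> simp [mkPt]

lemma mkPt_cont (m : ℕ) :
    Continuous (fun p : ℝ × EuclideanSpace ℝ (Fin m) => mkPt m p.1 p.2) := by
  unfold mkPt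
  refine (EuclideanSpace.equiv (Fin (m+1)) ℝ).symm.continuous.comp ?_
  refine continuous_pi fun i => ?_
  refine Fin.cases ?_ (fun j => ?_) i
  · simpa using continuous_fst
  · simp only [Fin.cons_succ]
    fun_prop

lemma cross_open {m : ℕ} {Ω : Set (EuclideanSpace ℝ (Fin (m+1)))} (ho : IsOpen Ω) (s : ℝ) :
    IsOpen (cross Ω s) :=
  ho.preimage ((mkPt_cont m).comp (Continuous.prodMk_right s))

lemma norm_le_mkPt (m : ℕ) (x : ℝ) (y : EuclideanSpace ℝ (Fin m)) : ‖y‖ ≤ ‖mkPt m x y‖ := by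
  rw [EuclideanSpace.norm_eq, EuclideanSpace.norm_eq]
  apply Real.sqrt_le_sqrt
  rw [Fin.sum_univ_succ]
  simp [mkPt]
  positivity

lemma cross_bdd {m : ℕ} {Ω : Set (EuclideanSpace ℝ (Fin (m+1)))} (hb : Bornology.IsBounded Ω) :
    ∃ R : ℝ, ∀ s, cross Ω s ⊆ Metric.closedBall 0 R := by
  obtain ⟨R, hR⟩ := hb.exists_norm_le
  refine ⟨R, fun s y hy => ?_⟩
  rw [mem_closedBall_zero_iff]
  exact (norm_le_mkPt m s y).trans (hR _ hy)

lemma cross_fin {m : ℕ} {Ω : Set (EuclideanSpace ℝ (Fin (m+1)))} (hb : Bornology.IsBounded Ω)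
    (s : ℝ) : volume (cross Ω s) ≠ ⊤ := by
  obtain ⟨R, hR⟩ := cross_bdd hb
  exact ((measure_mono (hR s)).trans_lt measure_closedBall_lt_top).ne

lemma ωvol_int {m : ℕ} {Ω : Set (EuclideanSpace ℝ (Fin (m+1)))} (ho : IsOpen Ω)
    (hb : Bornology.IsBounded Ω) (a b : ℝ) : IntervalIntegrable (ωvol Ω) volume a b := by
  obtain ⟨R, hR⟩ := cross_bdd hb
  have hmeas : Measurable (ωvol Ω) := by
    refine Measurable.ennreal_toReal ?_
    exact measurable_measure_prodMk_left (ho.preimage (mkPt_cont m)).measurableSet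
  refine (intervalIntegrable_const (c := (volume (Metric.closedBall (0 : EuclideanSpace ℝ (Fin m)) R)).toReal)).mono_fun
    hmeas.aestronglyMeasurable (Eventually.of_forall fun s => ?_)
  simp only [ωvol, Real.norm_eq_abs, ENNReal.abs_toReal]
  exact ENNReal.toReal_mono measure_closedBall_lt_top.ne (measure_mono (hR s))

lemma cone {m : ℕ} {Ω : Set (EuclideanSpace ℝ (Fin (m+1)))} (hc : Convex ℝ Ω)
    (hb : Bornology.IsBounded Ω) (p z r : ℝ) (hp : (cross Ω p).Nonempty) (h0 : 0 ≤ r) (h1 : r ≤ 1) :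
    r ^ m * ωvol Ω z ≤ ωvol Ω ((1 - r) * p + r * z) := by
  obtain ⟨y0, hy0⟩ := hp
  have hsub : AffineMap.homothety y0 r '' cross Ω z ⊆ cross Ω ((1 - r) * p + r * z) := by
    rintro _ ⟨y, hy, rfl⟩
    have : AffineMap.homothety y0 r y = (1 - r) • y0 + r • y := by
      rw [AffineMap.homothety_apply]
      simp only [vsub_eq_sub, vadd_eq_add]
      module
    rw [this]
    change mkPt m _ _ ∈ Ω
    rw [mkPt_comb]
    exact hc hy0 hy (by linarith) h0 (by ring)
  have h := ENNReal.toReal_mono (cross_fin hb _) (measure_mono (μ := volume) hsub)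
  rw [Measure.addHaar_image_homothety, ENNReal.toReal_mul, ENNReal.toReal_ofReal (abs_nonneg _),
    abs_of_nonneg (by positivity)] at h
  simpa [ωvol] using h

/-- Apex tending to `0`. -/
lemma cone0 {m : ℕ} {Ω : Set (EuclideanSpace ℝ (Fin (m+1)))} (hc : Convex ℝ Ω)
    (hb : Bornology.IsBounded Ω) (hn : ∀ s ∈ Ioo (0:ℝ) 1, (cross Ω s).Nonempty)
    (x z : ℝ) (hx : 0 < x) (hxz : x ≤ z) (hz : z < 1) :
    (x / z) ^ m * ωvol Ω z ≤ ωvol Ω x := by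
  rcases hxz.eq_or_lt with rfl | hxz
  · simp [hx.ne']
  have hz0 : 0 < z := hx.trans hxz
  have key : ∀ p ∈ Ioo 0 x, ((x - p) / (z - p)) ^ m * ωvol Ω z ≤ ωvol Ω x := by
    rintro p ⟨hp0, hpx⟩
    have hzp : 0 < z - p := by linarith
    have := cone hc hb p z ((x - p) / (z - p)) (hn p ⟨hp0, by linarith⟩)
      (div_nonneg (by linarith) hzp.le) ((div_le_one hzp).2 (by linarith))
    convert this using 2
    field_simp
    ring
  have ht : Tendsto (fun p : ℝ => ((x - p) / (z - p)) ^ m * ωvol Ω z) (𝓝[>] 0)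
      (𝓝 ((x / z) ^ m * ωvol Ω z)) := by
    have : ContinuousAt (fun p : ℝ => ((x - p) / (z - p)) ^ m * ωvol Ω z) 0 := by
      have : z - 0 ≠ 0 := by simpa using hz0.ne'
      fun_prop (disch := assumption)
    simpa using this.tendsto.mono_left nhdsWithin_le_nhds
  exact le_of_tendsto ht (by filter_upwards [Ioo_mem_nhdsGT hx] with p hp using key p hp)

/-- Apex tending to `1`. -/
lemma cone1 {m : ℕ} {Ω : Set (EuclideanSpace ℝ (Fin (m+1)))} (hc : Convex ℝ Ω)
    (hb : Bornology.IsBounded Ω) (hn : ∀ s ∈ Ioo (0:ℝ) 1, (cross Ω s).Nonempty)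
    (x z : ℝ) (hx : 0 < x) (hxz : x ≤ z) (hz : z < 1) :
    (x / z) ^ m * ωvol Ω (1 - z) ≤ ωvol Ω (1 - x) := by
  rcases hxz.eq_or_lt with rfl | hxz
  · simp [hx.ne']
  have hz0 : 0 < z := hx.trans hxz
  have key : ∀ p ∈ Ioo 0 x, ((x - p) / (z - p)) ^ m * ωvol Ω (1 - z) ≤ ωvol Ω (1 - x) := by
    rintro p ⟨hp0, hpx⟩
    have hzp : 0 < z - p := by linarith
    have := cone hc hb (1 - p) (1 - z) ((x - p) / (z - p)) (hn _ ⟨by linarith, by linarith⟩)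
      (div_nonneg (by linarith) hzp.le) ((div_le_one hzp).2 (by linarith))
    convert this using 2
    field_simp
    ring
  have ht : Tendsto (fun p : ℝ => ((x - p) / (z - p)) ^ m * ωvol Ω (1 - z)) (𝓝[>] 0)
      (𝓝 ((x / z) ^ m * ωvol Ω (1 - z))) := by
    have : ContinuousAt (fun p : ℝ => ((x - p) / (z - p)) ^ m * ωvol Ω (1 - z)) 0 := by
      have : z - 0 ≠ 0 := by simpa using hz0.ne'
      fun_prop (disch := assumption)
    simpa using this.tendsto.mono_left nhdsWithin_le_nhds
  exact le_of_tendsto ht (by filter_upwards [Ioo_mem_nhdsGT hx] with p hp using key p hp)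

lemma oneD (m : ℕ) (hm : 1 ≤ m) (f : ℝ → ℝ) (hi : ∀ a b, IntervalIntegrable f volume a b)
    (hpos : ∀ x ∈ Ioo (0:ℝ) 1, 0 < f x)
    (h : ∀ x z : ℝ, 0 < x → x ≤ z → z < 1 → (x / z) ^ m * f z ≤ f x)
    (a b : ℝ) (ha : 0 < a) (hab : a < b) (hb : b < 1) :
    (∫ x in b..1, f x) < ((1 - b) / (b - a)) * (1 / a) ^ m * ∫ x in a..b, f x := by
  have hb0 : 0 < b := ha.trans hab
  have hfb := hpos b ⟨hb0, hb⟩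
  have h1 : (∫ x in b..1, f x) ≤ ∫ x in b..1, (1 / b) ^ m * f b := by
    refine intervalIntegral.integral_mono_on_of_le_Ioo hb.le (hi _ _) intervalIntegrable_const ?_
    rintro z ⟨hbz, hz1⟩
    have := h b z hb0 hbz.le hz1
    have hz0 : 0 < z := hb0.trans hbz
    have hfz := hpos z ⟨hz0, hz1⟩
    have h2 : b ^ m * f z ≤ f b := by
      refine le_trans ?_ this
      gcongr
      rw [le_div_iff₀ hz0]; nlinarith
    rw [one_div, inv_pow, inv_mul_eq_div, le_div_iff₀ (by positivity)]
    linarith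
  have h2 : (∫ x in a..b, (x / b) ^ m * f b) ≤ ∫ x in a..b, f x := by
    refine intervalIntegral.integral_mono_on hab.le
      (Continuous.intervalIntegrable (by fun_prop) _ _) (hi _ _) ?_
    rintro x ⟨hax, hxb⟩
    exact h x b (by linarith) hxb hb
  have h3 : (∫ x in a..b, (a / b) ^ m * f b) < ∫ x in a..b, (x / b) ^ m * f b := by
    refine intervalIntegral.integral_lt_integral_of_continuousOn_of_le_of_exists_lt hab
      (by fun_prop) (by fun_prop) ?_ ⟨b, ⟨hab.le, le_rfl⟩, ?_⟩
    · rintro x ⟨hax, hxb⟩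
      gcongr
    · have : m ≠ 0 := by omega
      gcongr
  rw [intervalIntegral.integral_const, smul_eq_mul] at h1 h3
  have h4 := h3.trans_le h2
  have hba : 0 < b - a := by linarith
  have h1b : 0 < 1 - b := by linarith
  calc _ ≤ _ := h1
    _ = ((1 - b) / (b - a)) * (1 / a) ^ m * ((b - a) * ((a / b) ^ m * f b)) := by
      simp only [div_pow, one_pow]; field_simp
    _ < _ := by gcongr

/-- The mass of `ω` near the ends is controlled by its mass in the middle:
`∫_b^1 ω < ((1-b)/(b-a))(1/a)^{n-1} ∫_a^b ω`, `∫_0^a ω < (a/(b-a))(1/(1-b))^{n-1} ∫_a^b ω`,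
hence `∫_0^1 ω < C(a,b) ∫_a^b ω`. -/
theorem omega_mass_concentration
    (m : ℕ) (hm : 1 ≤ m) (Ω : Set (EuclideanSpace ℝ (Fin (m+1)))) :
      IsOpen Ω → Convex ℝ Ω → Bornology.IsBounded Ω →
      -- Ω ⊆ (0,1) × ℝ^{n-1}
      (∀ x y, mkPt m x y ∈ Ω → x ∈ Ioo (0:ℝ) 1) →
      -- nonempty cross-sections
      (∀ s ∈ Ioo (0:ℝ) 1, (cross Ω s).Nonempty) →
      ∀ a b : ℝ, 0 < a → a < b → b < 1 →
        (∫ x in b..1, ωvol Ω x)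
          < ((1 - b) / (b - a)) * (1 / a) ^ m * ∫ x in a..b, ωvol Ω x ∧
        (∫ x in (0:ℝ)..a, ωvol Ω x)
          < (a / (b - a)) * (1 / (1 - b)) ^ m * ∫ x in a..b, ωvol Ω x ∧
        (∫ x in (0:ℝ)..1, ωvol Ω x)
          < ((1 / (b - a)) * ((1 / a) ^ m * (1 - b) + (1 / (1 - b)) ^ m * a) + 1)
            * ∫ x in a..b, ωvol Ω x := by
  intro ho hc hb hsub hn a b ha hab hb1
  have hi := ωvol_int ho hb
  have hpos : ∀ x ∈ Ioo (0:ℝ) 1, 0 < ωvol Ω x := fun x hx =>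
    ENNReal.toReal_pos ((cross_open ho x).measure_pos _ (hn x hx)).ne' (cross_fin hb x)
  have A := oneD m hm (ωvol Ω) hi hpos (cone0 hc hb hn) a b ha hab hb1
  have B := oneD m hm (fun x => ωvol Ω (1 - x))
    (fun c d => by simpa using (hi (1 - c) (1 - d)).comp_sub_left 1)
    (fun x hx => hpos _ ⟨by linarith [hx.2], by linarith [hx.1]⟩) (cone1 hc hb hn)
    (1 - b) (1 - a) (by linarith) (by linarith) (by linarith)
  rw [intervalIntegral.integral_comp_sub_left (ωvol Ω) 1,
    intervalIntegral.integral_comp_sub_left (ωvol Ω) 1] at B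
  simp only [sub_self, sub_sub_cancel, sub_sub_sub_cancel_left] at B
  refine ⟨A, B, ?_⟩
  rw [← intervalIntegral.integral_add_adjacent_intervals (hi 0 a) (hi a 1),
    ← intervalIntegral.integral_add_adjacent_intervals (hi a b) (hi b 1)]
  refine lt_of_lt_of_eq (add_lt_add B (add_lt_add_right A _)) ?_
  ring
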